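/- Self-loop detection via E-separation: for every directed graph G = (V, E_d) and every node v ∈ V whose strongly connected component is the singleton scc_G(v) = {v}, the self-loop (v, v) is absent from E_d if and only if ({v}, {v}, pa_G(v) \ {v}) ∈ I_E^G. -/

import Mathlib

namespace ESepPaper

/-- A directed mixed graph: directed edges and bidirected edges over a node type `V`.
A directed graph (DG) is a DMG with `Ebi = ∅`. -/
structure DMG (V : Type) where
  Ed : Set (V × V)
  Ebi : Set (Sym2 V)

variable {V : Type}

/-- `G.ancestor u v` : there is a directed path `u → … → v` (possibly trivial). -/
def DMG.ancestor (G : DMG V) : V → V → Prop :=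
  Relation.ReflTransGen (fun u v => (u, v) ∈ G.Ed)

/-- Ancestors of a set `C`. -/
def DMG.anc (G : DMG V) (C : Set V) : Set V := {u | ∃ v ∈ C, G.ancestor u v}

/-- Strongly connected component of `v`. -/
def DMG.scc (G : DMG V) (v : V) : Set V := {w | G.ancestor w v ∧ G.ancestor v w}

/-- Parents of a set of nodes. -/
def DMG.pa (G : DMG V) (S : Set V) : Set V := {w | ∃ v ∈ S, (w, v) ∈ G.Ed}

/-- Kind of a traversed edge on a walk: forward directed, backward directed, or bidirected. -/
inductive LinkType | fwd | bwd | bi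
deriving DecidableEq

/-- Validity of a link of kind `t` between consecutive walk nodes `u` and `v`. -/
def DMG.linkOK (G : DMG V) (u v : V) : LinkType → Prop
  | .fwd => (u, v) ∈ G.Ed
  | .bwd => (v, u) ∈ G.Ed
  | .bi => s(u, v) ∈ G.Ebi

/-- Arrowhead at the second (right) endpoint of the link. -/
def LinkType.headR : LinkType → Prop
  | .fwd => True
  | .bwd => False
  | .bi => True

/-- Arrowhead at the first (left) endpoint of the link. -/
def LinkType.headL : LinkType → Prop
  | .fwd => False
  | .bwd => True
  | .bi => True

/-- Tail at the second (right) endpoint. -/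
def LinkType.tailR (t : LinkType) : Prop := t = .bwd

/-- Tail at the first (left) endpoint. -/
def LinkType.tailL (t : LinkType) : Prop := t = .fwd

/-- Walks in a DMG. -/
inductive DMG.Walk (G : DMG V) : V → V → Type
  | nil (v : V) : DMG.Walk G v v
  | cons {u v w : V} (t : LinkType) (h : G.linkOK u v t) (p : DMG.Walk G v w) : DMG.Walk G u w

/-- An interior node on a walk, whose incoming link is `t1` and outgoing link is `t2`,
is a collider iff both links have an arrowhead at it. -/
def colliderAt (t1 t2 : LinkType) : Prop := t1.headR ∧ t2.headL

/-- An interior non-collider `v` between neighbours `u` (incoming link `t1`) and `w`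
(outgoing link `t2`) is unblockable: on every side where the link has a tail at `v`, the
corresponding neighbour lies in `scc_G(v)` (left-chain/right-chain/fork cases). -/
def unblockableAt (G : DMG V) (u v w : V) (t1 t2 : LinkType) : Prop :=
  (t1.tailR → u ∈ G.scc v) ∧ (t2.tailL → w ∈ G.scc v)

namespace DMG.Walk

variable {G : DMG V}

/-- First node of a walk. -/
def first {a b : V} (_ : G.Walk a b) : V := a

def length : {a b : V} → G.Walk a b → ℕ
  | _, _, .nil _ => 0
  | _, _, .cons _ _ p => p.length + 1

def support : {a b : V} → G.Walk a b → List V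
  | a, _, .nil _ => [a]
  | a, _, .cons _ _ p => a :: p.support

/-- Auxiliary: σ-openness of the remainder of a walk, where `u` is the previous node and
`t1` the link from `u` into the current first node. -/
def sigmaOpenAux (C : Set V) : (u : V) → LinkType → {b c : V} → G.Walk b c → Prop
  | _, _, _, _, .nil _ => True
  | u, t1, v, _, .cons t2 _ q =>
      ((colliderAt t1 t2 → v ∈ G.anc C) ∧
       (¬ colliderAt t1 t2 → ¬ unblockableAt G u v q.first t1 t2 → v ∉ C)) ∧
      sigmaOpenAux C v t2 q

/-- The walk is σ-open given `C`: every collider on it is an ancestor of a node of `C`, and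
no blockable non-collider on it lies in `C`. -/
def sigmaOpen (C : Set V) : {a b : V} → G.Walk a b → Prop
  | _, _, .nil _ => True
  | a, _, .cons t _ q => sigmaOpenAux C a t q

/-- All links are forward directed. -/
def IsDirected : {a b : V} → G.Walk a b → Prop
  | _, _, .nil _ => True
  | _, _, .cons t _ p => t = .fwd ∧ p.IsDirected

/-- Interior nodes of the walk (all nodes except the two endpoints). -/
def interior {a b : V} (p : G.Walk a b) : List V := p.support.tail.dropLast

/-- Arrowhead at the first endpoint. -/
def headAtStart : {a b : V} → G.Walk a b → Prop
  | _, _, .nil _ => False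
  | _, _, .cons t _ _ => t.headL

def headAtEndAux : LinkType → {a b : V} → G.Walk a b → Prop
  | t, _, _, .nil _ => t.headR
  | _, _, _, .cons t _ q => headAtEndAux t q

/-- Arrowhead at the last endpoint. -/
def headAtEnd : {a b : V} → G.Walk a b → Prop
  | _, _, .nil _ => False
  | _, _, .cons t _ q => headAtEndAux t q

def noCollidersAux : LinkType → {a b : V} → G.Walk a b → Prop
  | _, _, _, .nil _ => True
  | t1, _, _, .cons t2 _ q => ¬ colliderAt t1 t2 ∧ noCollidersAux t2 q

/-- There is no collider on the walk. -/
def NoColliders : {a b : V} → G.Walk a b → Prop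
  | _, _, .nil _ => True
  | _, _, .cons t _ q => noCollidersAux t q

def collidersInAux (S : Set V) : LinkType → {a b : V} → G.Walk a b → Prop
  | _, _, _, .nil _ => True
  | t1, v, _, .cons t2 _ q => (colliderAt t1 t2 → v ∈ S) ∧ collidersInAux S t2 q

/-- Every collider on the walk lies in `S`. -/
def CollidersIn (S : Set V) : {a b : V} → G.Walk a b → Prop
  | _, _, .nil _ => True
  | _, _, .cons t _ q => collidersInAux S t q

def noncollUnblAux : (u : V) → LinkType → {b c : V} → G.Walk b c → Prop
  | _, _, _, _, .nil _ => True
  | u, t1, v, _, .cons t2 _ q =>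
      (¬ colliderAt t1 t2 → unblockableAt G u v q.first t1 t2) ∧ noncollUnblAux v t2 q

/-- Every interior non-collider on the walk is unblockable. -/
def NoncollidersUnblockable : {a b : V} → G.Walk a b → Prop
  | _, _, .nil _ => True
  | a, _, .cons t _ q => noncollUnblAux a t q

/-- The set of edges occurring on a walk (directed edges as ordered pairs in `E_d`,
bidirected edges as unordered pairs). -/
def edges : {a b : V} → G.Walk a b → Set ((V × V) ⊕ Sym2 V)
  | _, _, .nil _ => ∅
  | a, _, .cons t _ p =>
      insert (match t with
        | .fwd => Sum.inl (a, p.first)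
        | .bwd => Sum.inl (p.first, a)
        | .bi => Sum.inr s(a, p.first)) p.edges

/-- Concatenation of walks. -/
def append : {a b c : V} → G.Walk a b → G.Walk b c → G.Walk a c
  | _, _, _, .nil _, q => q
  | _, _, _, .cons t h p, q => .cons t h (p.append q)

/-- A walk `v_0, …, v_{n+1}` is a path if no node besides the final endpoint occurs more
than once, i.e. `v_0, …, v_n` are pairwise distinct. -/
def IsPath {a b : V} (p : G.Walk a b) : Prop := p.support.dropLast.Nodup

end DMG.Walk

/-- `A` is σ-separated from `B` given `C` in `G`: every walk from a node of `A` to a node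
of `B` is σ-blocked given `C`. -/
def DMG.sigmaSep (G : DMG V) (A B C : Set V) : Prop :=
  ∀ a ∈ A, ∀ b ∈ B, ∀ p : G.Walk a b, ¬ p.sigmaOpen C

/-- The lifted dependency graph of `G`, on two copies of `V`
(`Sum.inl` is the past copy `V_0`, `Sum.inr` the future copy `V_1`). -/
def DMG.lift (G : DMG V) : DMG (V ⊕ V) where
  Ed := {e | ∃ u v, (u, v) ∈ G.Ed ∧
        (e = (Sum.inl u, Sum.inl v) ∨ e = (Sum.inl u, Sum.inr v) ∨
         e = (Sum.inr u, Sum.inr v))}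
  Ebi := {e | ∃ u v, s(u, v) ∈ G.Ebi ∧
        (e = s(Sum.inl u, Sum.inl v) ∨ e = s(Sum.inl u, Sum.inr v) ∨
         e = s(Sum.inr u, Sum.inl v) ∨ e = s(Sum.inr u, Sum.inr v))}

/-- `B` is E-separated from `A` given `C` in `G`:
`A_0` is σ-separated from `B_1` given `C_0 ∪ (C_1 \ B_1)` in the lifted dependency graph. -/
def DMG.ESep (G : DMG V) (A B C : Set V) : Prop :=
  G.lift.sigmaSep (Sum.inl '' A) (Sum.inr '' B)
    ((Sum.inl '' C) ∪ ((Sum.inr '' C) \ (Sum.inr '' B)))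

/-- The independence model `I_E^G` of E-separation triples. -/
def DMG.IE (G : DMG V) : Set (Set V × Set V × Set V) :=
  {t | G.ESep t.1 t.2.1 t.2.2}


/-- The latent projection of `G` onto the observed nodes `O`: a directed edge when there is
a non-trivial directed walk whose interior nodes are all latent, and a bidirected edge when
there is a non-trivial collider-free walk with arrowheads at both endpoints whose interior
nodes are all latent. -/
def DMG.latentProj (G : DMG V) (O : Set V) : DMG O where
  Ed := {e | ∃ p : G.Walk e.1.val e.2.val,
          p.IsDirected ∧ 0 < p.length ∧ ∀ x ∈ p.interior, x ∉ O}
  Ebi := {e | ∃ u v : O, e = s(u, v) ∧ ∃ p : G.Walk u.val v.val,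
          p.headAtStart ∧ p.headAtEnd ∧ p.NoColliders ∧ 0 < p.length ∧
          ∀ x ∈ p.interior, x ∉ O}

/-- The last edge of the walk `p` before entering `scc_G(w)` has an arrowhead at its
endpoint in `scc_G(w)` (vacuous if the walk never leaves `scc_G(w)`). -/
def DMG.lastEdgeInto (G : DMG V) {a b : V} (w : V) (p : G.Walk a b) : Prop :=
  (∀ x ∈ p.support, x ∈ G.scc w) ∨
  ∃ (x y : V) (t : LinkType) (h : G.linkOK x y t) (p₁ : G.Walk a x) (p₂ : G.Walk y b),
    p = p₁.append (.cons t h p₂) ∧ x ∉ G.scc w ∧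
    (∀ z ∈ p₂.support, z ∈ G.scc w) ∧ t.headR

/-- An (asymmetric) inducing path from `v` to `w`: a non-trivial path such that every
collider on it is an ancestor of `v` or `w`, every interior non-collider is unblockable,
and the last edge before entering `scc_G(w)` points into `scc_G(w)`. -/
def DMG.IsInducingPath (G : DMG V) {v w : V} (p : G.Walk v w) : Prop :=
  0 < p.length ∧ p.IsPath ∧
  p.CollidersIn (G.anc {v, w}) ∧ p.NoncollidersUnblockable ∧ G.lastEdgeInto w p

/-!
The parents of `v` separate `v₁` from its non-descendants in the lifted graph, as in the directed
local Markov property. Read an open walk ending at a node `b` backwards. Its last edge other than a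
loop at `b` cannot come from a parent `c`: the parents are conditioned on, and `c` is blockable
because it is not a descendant of `b`. So the walk leaves `b` along an outgoing edge and must keep
following edges forwards, since a turn would be a collider that is both a descendant of `b` and an
ancestor of the conditioning set. Hence the other end of the walk is a descendant of `b`. But no
node of `V₀` descends from `v₁`, so an open walk from `u₀` to `v₁` has to start with the edge
`u₀ → v₁`; conversely, that edge alone is an open walk for every conditioning set.
-/

namespace DMG

theorem mem_pa_singleton {G : DMG V} {u v : V} : u ∈ G.pa {v} ↔ (u, v) ∈ G.Ed := by
  simp [pa]

theorem notMem_anc_pa_diff_of_scc_eq_singleton {G : DMG V} {v : V} (hscc : G.scc v = {v}) :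
    v ∉ G.anc (G.pa {v} \ {v}) := by
  rintro ⟨u, ⟨hu, hne⟩, hvu⟩
  have hmem : u ∈ G.scc v := ⟨.single (mem_pa_singleton.1 hu), hvu⟩
  exact hne (hscc ▸ hmem)

section LocalMarkov

variable {G : DMG V} {b : V} {C : Set V}

theorem not_unblockableAt_fwd_of_mem (hanc : b ∉ G.anc C) {u c : V} (hc : c ∈ C)
    (t : LinkType) : ¬ unblockableAt G u c b t .fwd :=
  fun hun => hanc ⟨c, hc, (hun.2 rfl).1⟩

theorem notMem_anc_of_ancestor (hanc : b ∉ G.anc C) {c : V} (hbc : G.ancestor b c) :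
    c ∉ G.anc C := by
  rintro ⟨d, hd, hcd⟩
  exact hanc ⟨d, hd, hbc.trans hcd⟩

theorem eq_bwd_or_eq_fwd_of_linkOK (hbi : ∀ u, s(u, b) ∉ G.Ebi) {u : V} {t : LinkType}
    (hlink : G.linkOK u b t) : t = .bwd ∨ t = .fwd := by
  cases t with
  | fwd => exact .inr rfl
  | bwd => exact .inl rfl
  | bi => exact absurd hlink (hbi u)

theorem Walk.bwd_or_fwd_of_sigmaOpenAux {c : V} (q : G.Walk c b)
    (hbi : ∀ u, s(u, b) ∉ G.Ebi) (hpa : G.pa {b} \ {b} ⊆ C) (hanc : b ∉ G.anc C)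
    {u : V} {t : LinkType} (hlink : G.linkOK u c t) (hopen : q.sigmaOpenAux C u t) :
    (t = .bwd ∧ G.ancestor b c) ∨ (t = .fwd ∧ c = b) := by
  induction q generalizing u t with
  | nil b => exact (eq_bwd_or_eq_fwd_of_linkOK hbi hlink).imp (⟨·, .refl⟩) (⟨·, rfl⟩)
  | @cons c d b t' hcd q ih =>
    obtain ⟨⟨hcollider, hnoncollider⟩, hopen⟩ := hopen
    rcases ih hbi hpa hanc hcd hopen with ⟨rfl, hbd⟩ | ⟨rfl, rfl⟩
    · have hbc : G.ancestor b c := hbd.tail hcd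
      have not_collider : ¬ colliderAt t .bwd :=
        fun h => notMem_anc_of_ancestor hanc hbc (hcollider h)
      cases t with
      | bwd => exact .inl ⟨rfl, hbc⟩
      | fwd | bi => exact absurd ⟨trivial, trivial⟩ not_collider
    · by_cases hc : c = d
      · subst hc
        exact (eq_bwd_or_eq_fwd_of_linkOK hbi hlink).imp (⟨·, .refl⟩) (⟨·, rfl⟩)
      · have hcC : c ∈ C := hpa ⟨mem_pa_singleton.2 hcd, hc⟩
        exact absurd hcC (hnoncollider And.right (not_unblockableAt_fwd_of_mem hanc hcC t))

theorem sigmaSep_singleton_of_pa_diff_subset {A : Set V} (hbi : ∀ u, s(u, b) ∉ G.Ebi)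
    (hpa : G.pa {b} \ {b} ⊆ C) (hanc : b ∉ G.anc C) (hA : ∀ a ∈ A, ¬ G.ancestor b a)
    (hApa : Disjoint A (G.pa {b})) : G.sigmaSep A {b} C := by
  rintro a ha _ rfl p hopen
  cases p with
  | nil => exact hA a ha .refl
  | cons t hlink q =>
    rcases q.bwd_or_fwd_of_sigmaOpenAux hbi hpa hanc hlink hopen with ⟨rfl, hbc⟩ | ⟨rfl, rfl⟩
    · exact hA a ha (hbc.tail hlink)
    · exact hApa.notMem_of_mem_left ha (mem_pa_singleton.2 hlink)

end LocalMarkov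

section Lift

variable {G : DMG V}

theorem inl_inr_mem_lift_Ed {u v : V} :
    (Sum.inl u, Sum.inr v) ∈ G.lift.Ed ↔ (u, v) ∈ G.Ed := by
  simp [lift]

theorem inr_inr_mem_lift_Ed {u v : V} :
    (Sum.inr u, Sum.inr v) ∈ G.lift.Ed ↔ (u, v) ∈ G.Ed := by
  simp [lift]

theorem inr_inl_notMem_lift_Ed {u v : V} : (Sum.inr u, Sum.inl v) ∉ G.lift.Ed := by
  simp [lift]

theorem notMem_lift_Ebi_inr {v : V} (hbi : ∀ u, s(u, v) ∉ G.Ebi) (x : V ⊕ V) :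
    s(x, Sum.inr v) ∉ G.lift.Ebi := by
  rintro ⟨u, w, huw, h⟩
  have huv : s(u, w) = s(x.elim id id, v) := by
    rcases h with h | h | h | h <;>
      simpa using (congrArg (Sym2.map (Sum.elim id id)) h).symm
  exact hbi _ (huv ▸ huw)

theorem exists_inr_of_lift_ancestor_inr {v : V} {x : V ⊕ V}
    (h : G.lift.ancestor (Sum.inr v) x) : ∃ w, x = Sum.inr w ∧ G.ancestor v w := by
  induction h with
  | refl => exact ⟨v, rfl, .refl⟩
  | @tail _ y _ hedge ih =>
    obtain ⟨w, rfl, hvw⟩ := ih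
    cases y with
    | inl y => exact absurd hedge inr_inl_notMem_lift_Ed
    | inr y => exact ⟨y, rfl, hvw.tail (inr_inr_mem_lift_Ed.1 hedge)⟩

theorem eSep_singleton_of_pa_subset {A C : Set V} {v : V} (hbi : ∀ u, s(u, v) ∉ G.Ebi)
    (hpa : G.pa {v} ⊆ C) (hanc : v ∉ G.anc (C \ {v})) (hA : Disjoint A (G.pa {v})) :
    G.ESep A {v} C := by
  rw [ESep, Set.image_singleton]
  apply sigmaSep_singleton_of_pa_diff_subset (notMem_lift_Ebi_inr hbi)
  · rintro (u | u) ⟨hu, hne⟩ <;> rw [mem_pa_singleton] at hu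
    · exact .inl ⟨u, hpa (mem_pa_singleton.2 (inl_inr_mem_lift_Ed.1 hu)), rfl⟩
    · exact .inr ⟨⟨u, hpa (mem_pa_singleton.2 (inr_inr_mem_lift_Ed.1 hu)), rfl⟩, hne⟩
  · rintro ⟨x, hx, hvx⟩
    obtain ⟨w, rfl, hvw⟩ := exists_inr_of_lift_ancestor_inr hvx
    exact hanc ⟨w, by simpa using hx, hvw⟩
  · rintro _ ⟨a, -, rfl⟩ hva
    obtain ⟨w, hw, -⟩ := exists_inr_of_lift_ancestor_inr hva
    exact Sum.inl_ne_inr hw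
  · rw [Set.disjoint_left]
    rintro _ ⟨a, ha, rfl⟩ hpa_a
    exact hA.notMem_of_mem_left ha
      (mem_pa_singleton.2 (inl_inr_mem_lift_Ed.1 (mem_pa_singleton.1 hpa_a)))

theorem not_eSep_of_mem_Ed {A B : Set V} {u v : V} (hu : u ∈ A) (hv : v ∈ B)
    (huv : (u, v) ∈ G.Ed) (C : Set V) : ¬ G.ESep A B C := fun hsep =>
  hsep _ (Set.mem_image_of_mem _ hu) _ (Set.mem_image_of_mem _ hv)
    (.cons .fwd (inl_inr_mem_lift_Ed.2 huv) (.nil _)) trivial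

end Lift

end DMG

theorem self_loop_detection_general (G : DMG V) (u v : V) (hbi : ∀ w, s(w, v) ∉ G.Ebi)
    (hscc : G.scc v = {v}) :
    (u, v) ∉ G.Ed ↔ (({u} : Set V), ({v} : Set V), G.pa {v} \ {u}) ∈ G.IE := by
  constructor
  · intro huv
    have hu : u ∉ G.pa {v} := mt DMG.mem_pa_singleton.1 huv
    rw [Set.sdiff_singleton_eq_self hu]
    exact DMG.eSep_singleton_of_pa_subset hbi subset_rfl
      (DMG.notMem_anc_pa_diff_of_scc_eq_singleton hscc) (Set.disjoint_singleton_left.2 hu)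
  · intro hsep huv
    exact DMG.not_eSep_of_mem_Ed (Set.mem_singleton u) (Set.mem_singleton v) huv _ hsep

/-- Self-loop detection via E-separation for nodes whose strongly connected component is a
singleton. -/
theorem self_loop_detection {V : Type} [Fintype V] (G : DMG V) (hG : G.Ebi = ∅)
    (v : V) (hscc : G.scc v = {v}) :
    (v, v) ∉ G.Ed ↔ (({v} : Set V), ({v} : Set V), G.pa {v} \ {v}) ∈ G.IE :=
  self_loop_detection_general G v v (by simp [hG]) hscc

end ESepPaper
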